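/- Let T be a tournament on n vertices with π₂(T) > (7n − 10)/36. Then T is path extendable: for every non-hamiltonian directed path P in T there exists a directed path P′ with the same initial and terminal vertices as P and V(P′) = V(P) ∪ {w} for some vertex w ∉ V(P). -/

import Mathlib

open Finset

variable {V : Type*} [Fintype V] [DecidableEq V]

/-- A tournament: irreflexive, and between any two distinct vertices exactly one arc. -/
def IsTournament (r : V → V → Prop) : Prop :=
  (∀ u, ¬ r u u) ∧ ∀ u v : V, u ≠ v → Xor' (r u v) (r v u)

/-- Out-degree. -/
def outDeg (r : V → V → Prop) [DecidableRel r] (u : V) : ℕ :=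
  (Finset.univ.filter fun v => r u v).card

/-- In-degree. -/
def inDeg (r : V → V → Prop) [DecidableRel r] (u : V) : ℕ :=
  (Finset.univ.filter fun v => r v u).card

/-- Number of directed 2-paths from `u` to `v`. -/
def p2 (r : V → V → Prop) [DecidableRel r] (u v : V) : ℕ :=
  (Finset.univ.filter fun w => r u w ∧ r w v).card

/-- `π` is the minimum of `p2` over ordered pairs of distinct vertices. -/
def IsPi2 (r : V → V → Prop) [DecidableRel r] (π : ℕ) : Prop :=
  (∀ x y : V, x ≠ y → π ≤ p2 r x y) ∧ ∃ x y : V, x ≠ y ∧ p2 r x y = π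

/-- `i` is the irregularity: the maximum of |d⁺(u) − d⁻(u)|. -/
def IsIrreg (r : V → V → Prop) [DecidableRel r] (i : ℕ) : Prop :=
  (∀ u : V, ((outDeg r u : ℤ) - inDeg r u).natAbs ≤ i) ∧
    ∃ u : V, ((outDeg r u : ℤ) - inDeg r u).natAbs = i

/-- A directed path, as a duplicate-free list whose consecutive members are arcs. -/
def IsDirPath (r : V → V → Prop) (l : List V) : Prop :=
  l.Nodup ∧ l.Chain' r

/-- A path is extendable if some path with the same endpoints uses its vertices plus one more. -/
def Extendable (r : V → V → Prop) (l : List V) : Prop :=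
  ∃ w ∉ l.toFinset, ∃ l' : List V, IsDirPath r l' ∧ l'.head? = l.head? ∧
    l'.getLast? = l.getLast? ∧ l'.toFinset = insert w l.toFinset

/-- Every nonhamiltonian path (on at least two vertices) is extendable. -/
def PathExtendable (r : V → V → Prop) : Prop :=
  ∀ l : List V, IsDirPath r l → 2 ≤ l.length →
    l.toFinset ≠ Finset.univ → Extendable r l

/-!
Suppose a path `v 0, …, v (k - 1)` cannot be extended. No outside vertex `w` can be inserted, so the
in-neighbours of `w` on the path form a final segment of it; nor can the path be extended by cutting
it into four pieces, exchanging the two middle ones and joining them through `w`.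

Let `p` be a lower bound for all numbers of 2-paths. If `r x y` and `y` has few in-neighbours among
the out-neighbours of `x`, then the at least `p` 2-paths from `x` to `y` force `x` to have at least
`2 p + 1` out-neighbours, and this localises to any vertex set that is closed under these 2-paths.

If some outside `w` has arcs to `v 1` and from `v (k - 2)`, the rotations through `w` make the
out-neighbours of `v 0` and the in-neighbours of `v (k - 1)` nearly disjoint, whence
`4 p + 1 ≤ k`, while the outside has at least `2 p + 2` vertices. Otherwise the outside splits into
the in-neighbours and the out-neighbours of `v 1`, which are also those of `v (k - 2)`, and the
degrees at both ends of the path and inside one of these two parts give `16 p + 10 ≤ 3 n`.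
-/

section Tournament

variable {α : Type*} {r : α → α → Prop} {p : ℕ} {x y : α}

namespace IsTournament

theorem irrefl (hT : IsTournament r) (x : α) : ¬ r x x := hT.1 x

theorem ne_of_rel (hT : IsTournament r) (h : r x y) : x ≠ y := by
  rintro rfl
  exact hT.irrefl x h

theorem asymm (hT : IsTournament r) (h : r x y) : ¬ r y x := by
  rcases hT.2 x y (hT.ne_of_rel h) with h' | h'
  · exact h'.2
  · exact absurd h h'.2

theorem rel_of_not_rel (hT : IsTournament r) (hne : x ≠ y) (h : ¬ r y x) : r x y := by
  rcases hT.2 x y hne with h' | h'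
  · exact h'.1
  · exact absurd h'.1 h

theorem swap (hT : IsTournament r) : IsTournament (Function.swap r) :=
  ⟨hT.1, fun x y hne => hT.2 y x hne.symm⟩

theorem card_out_add_card_in [DecidableEq α] [DecidableRel r] (hT : IsTournament r)
    (S : Finset α) (x : α) : #{y ∈ S | r x y} + #{y ∈ S | r y x} = #(S.erase x) := by
  rw [← card_union_of_disjoint]
  · congr 1
    ext y
    simp only [mem_union, mem_filter, mem_erase]
    constructor
    · rintro (⟨hy, h⟩ | ⟨hy, h⟩)
      · exact ⟨(hT.ne_of_rel h).symm, hy⟩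
      · exact ⟨hT.ne_of_rel h, hy⟩
    · rintro ⟨hne, hy⟩
      by_cases h : r x y
      · exact Or.inl ⟨hy, h⟩
      · exact Or.inr ⟨hy, hT.rel_of_not_rel hne h⟩
  · exact disjoint_filter.2 fun y _ h => hT.asymm h

theorem exists_two_mul_card_in_lt [DecidableRel r] (hT : IsTournament r) {S : Finset α}
    (hS : S.Nonempty) : ∃ y ∈ S, 2 * #{z ∈ S | r z y} < #S := by
  classical
  have sum_out_eq_sum_in : ∑ y ∈ S, #{z ∈ S | r y z} = ∑ y ∈ S, #{z ∈ S | r z y} :=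
    sum_card_bipartiteAbove_eq_sum_card_bipartiteBelow r
  apply exists_lt_of_sum_lt
  calc ∑ y ∈ S, 2 * #{z ∈ S | r z y}
      = ∑ y ∈ S, (#{z ∈ S | r y z} + #{z ∈ S | r z y}) := by
        rw [← mul_sum, sum_add_distrib, sum_out_eq_sum_in, two_mul]
    _ < ∑ _y ∈ S, #S := sum_lt_sum_of_nonempty hS fun y hy => by
        rw [hT.card_out_add_card_in]
        exact card_erase_lt_of_mem hy

end IsTournament

variable [Fintype α] [DecidableRel r]

theorem p2_swap (x y : α) : p2 (Function.swap r) x y = p2 r y x := by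
  simp only [p2, Function.swap, and_comm]

theorem le_p2_swap (hp : ∀ x y, x ≠ y → p ≤ p2 r x y) (x y : α) (hne : x ≠ y) :
    p ≤ p2 (Function.swap r) x y :=
  (hp y x hne.symm).trans_eq (p2_swap x y).symm

theorem exists_rel_rel_of_p2_pos (h : 0 < p2 r x y) : ∃ z, r x z ∧ r z y := by
  obtain ⟨z, hz⟩ := card_pos.1 h
  exact ⟨z, (mem_filter.1 hz).2⟩

theorem exists_ne_rel_rel_of_one_lt_p2 (h : 1 < p2 r x y) (u : α) :
    ∃ z ≠ u, r x z ∧ r z y := by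
  obtain ⟨z, hz, hne⟩ := exists_mem_ne h u
  exact ⟨z, hne, (mem_filter.1 hz).2⟩

namespace IsTournament

theorem two_mul_add_one_le_card_out (hT : IsTournament r) (hp : ∀ x y, x ≠ y → p ≤ p2 r x y)
    {S : Finset α} (hne : ∃ y ∈ S, r x y)
    (hS : ∀ y ∈ S, r x y → ∀ z, r x z → r z y → z ∈ S) :
    2 * p + 1 ≤ #{y ∈ S | r x y} := by
  obtain ⟨y₀, hy₀, hxy₀⟩ := hne
  obtain ⟨y, hy, hlt⟩ :=
    hT.exists_two_mul_card_in_lt (S := {y ∈ S | r x y}) ⟨y₀, mem_filter.2 ⟨hy₀, hxy₀⟩⟩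
  obtain ⟨hyS, hxy⟩ := mem_filter.1 hy
  have hle : p ≤ #{z ∈ {z ∈ S | r x z} | r z y} := by
    refine (hp x y (hT.ne_of_rel hxy)).trans (card_le_card fun z hz => ?_)
    obtain ⟨hxz, hzy⟩ := (mem_filter.1 hz).2
    exact mem_filter.2 ⟨mem_filter.2 ⟨hS y hyS hxy z hxz hzy, hxz⟩, hzy⟩
  omega

variable [Nontrivial α]

theorem two_mul_add_one_le_outDeg (hT : IsTournament r) (hp : ∀ x y, x ≠ y → p ≤ p2 r x y)
    (hp_pos : 0 < p) (x : α) : 2 * p + 1 ≤ outDeg r x := by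
  obtain ⟨y, hne⟩ := exists_ne x
  obtain ⟨z, hxz, -⟩ := exists_rel_rel_of_p2_pos (hp_pos.trans_le (hp x y hne.symm))
  exact hT.two_mul_add_one_le_card_out hp ⟨z, mem_univ z, hxz⟩ fun _ _ _ z _ _ => mem_univ z

theorem two_mul_add_one_le_inDeg (hT : IsTournament r) (hp : ∀ x y, x ≠ y → p ≤ p2 r x y)
    (hp_pos : 0 < p) (x : α) : 2 * p + 1 ≤ inDeg r x :=
  hT.swap.two_mul_add_one_le_outDeg (le_p2_swap hp) hp_pos x

theorem four_mul_add_three_le_card (hT : IsTournament r) (hp : ∀ x y, x ≠ y → p ≤ p2 r x y)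
    (hp_pos : 0 < p) : 4 * p + 3 ≤ Fintype.card α := by
  classical
  obtain ⟨x⟩ : Nonempty α := inferInstance
  have hout := hT.two_mul_add_one_le_outDeg hp hp_pos x
  have hin := hT.two_mul_add_one_le_inDeg hp hp_pos x
  have hsum : outDeg r x + inDeg r x = #(univ.erase x) := hT.card_out_add_card_in univ x
  have hcard := card_erase_add_one (mem_univ x)
  rw [card_univ] at hcard
  omega

end IsTournament

end Tournament

section BlockedPath

variable {α : Type*} [DecidableEq α] {r : α → α → Prop} {k p : ℕ} {v : ℕ → α} {w : α}

/-- The vertex set of the path `v 0, …, v (k - 1)`. -/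
def pathVerts (k : ℕ) (v : ℕ → α) : Finset α := (range k).image v

theorem mem_pathVerts {x : α} : x ∈ pathVerts k v ↔ ∃ i < k, v i = x := by
  simp only [pathVerts, mem_image, mem_range]

theorem apply_mem_pathVerts {i : ℕ} (hi : i < k) : v i ∈ pathVerts k v :=
  mem_pathVerts.2 ⟨i, hi, rfl⟩

theorem ne_of_notMem_pathVerts (hw : w ∉ pathVerts k v) {i : ℕ} (hi : i < k) : v i ≠ w := by
  rintro rfl
  exact hw (apply_mem_pathVerts hi)

theorem pathVerts_reverse : pathVerts k (fun i => v (k - 1 - i)) = pathVerts k v := by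
  ext x
  simp only [mem_pathVerts]
  constructor
  · rintro ⟨i, hi, rfl⟩
    exact ⟨k - 1 - i, by omega, rfl⟩
  · rintro ⟨i, hi, rfl⟩
    exact ⟨k - 1 - i, by omega, by rw [show k - 1 - (k - 1 - i) = i by omega]⟩

/-- A directed path `v 0, …, v (k - 1)` on at least two vertices which is extended neither by
inserting an outside vertex `w` between two consecutive vertices nor by the rotation
`v 0, …, v a, v (b + 1), …, v c, w, v (a + 1), …, v b, v (c + 1), …, v (k - 1)`.
The path is encoded by a sequence, whose values from `v k` on are irrelevant, so that its reversal
is `i ↦ v (k - 1 - i)`. -/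
structure IsBlockedPath (r : α → α → Prop) (k : ℕ) (v : ℕ → α) : Prop where
  two_le : 2 ≤ k
  injOn : Set.InjOn v (Set.Iio k)
  rel_succ : ∀ i, i + 1 < k → r (v i) (v (i + 1))
  not_insert : ∀ w ∉ pathVerts k v, ∀ i, i + 1 < k → r (v i) w → ¬ r w (v (i + 1))
  not_rotate : ∀ w ∉ pathVerts k v, ∀ a b c, a < b → b < c → c + 1 < k →
    r (v a) (v (b + 1)) → r (v b) (v (c + 1)) → r (v c) w → ¬ r w (v (a + 1))

namespace IsBlockedPath

theorem swap (h : IsBlockedPath r k v) :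
    IsBlockedPath (Function.swap r) k (fun i => v (k - 1 - i)) where
  two_le := h.two_le
  injOn i hi j hj hij := by
    simp only [Set.mem_Iio] at hi hj
    have := h.injOn (show k - 1 - i < k by omega) (show k - 1 - j < k by omega) hij
    omega
  rel_succ i hi := by
    have := h.rel_succ (k - 1 - (i + 1)) (by omega)
    rwa [show k - 1 - (i + 1) + 1 = k - 1 - i by omega] at this
  not_insert w hw i hi hiw hwi := by
    rw [pathVerts_reverse] at hw
    refine h.not_insert w hw (k - 1 - (i + 1)) (by omega) hwi ?_
    rwa [show k - 1 - (i + 1) + 1 = k - 1 - i by omega]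
  not_rotate w hw a b c hab hbc hc hab' hbc' hcw hwa := by
    rw [pathVerts_reverse] at hw
    refine h.not_rotate w hw (k - 1 - (c + 1)) (k - 1 - (b + 1)) (k - 1 - (a + 1))
      (by omega) (by omega) (by omega) ?_ ?_ hwa ?_
    · rwa [show k - 1 - (b + 1) + 1 = k - 1 - b by omega]
    · rwa [show k - 1 - (a + 1) + 1 = k - 1 - a by omega]
    · rwa [show k - 1 - (c + 1) + 1 = k - 1 - c by omega]

theorem card_pathVerts (h : IsBlockedPath r k v) : #(pathVerts k v) = k := by
  rw [pathVerts, card_image_of_injOn (by simpa using h.injOn), card_range]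

theorem card_compl_add_length [Fintype α] (h : IsBlockedPath r k v) :
    #(pathVerts k v)ᶜ + k = Fintype.card α := by
  rw [← card_compl_add_card (pathVerts k v), h.card_pathVerts]

theorem nontrivial (h : IsBlockedPath r k v) : Nontrivial α :=
  have := h.two_le
  ⟨v 0, v 1, fun h01 => zero_ne_one (h.injOn (show 0 < k by omega) (show 1 < k by omega) h01)⟩

theorem rel_of_le (h : IsBlockedPath r k v) (hT : IsTournament r) (hw : w ∉ pathVerts k v)
    {i j : ℕ} (hij : i ≤ j) (hj : j < k) (hi : r (v i) w) : r (v j) w := by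
  induction j, hij using Nat.le_induction with
  | base => exact hi
  | succ j _ ih =>
    exact hT.rel_of_not_rel (ne_of_notMem_pathVerts hw hj) (h.not_insert w hw j hj (ih (by omega)))

theorem rel_of_ge (h : IsBlockedPath r k v) (hT : IsTournament r) (hw : w ∉ pathVerts k v)
    {i j : ℕ} (hij : i ≤ j) (hj : j < k) (hwj : r w (v j)) : r w (v i) :=
  hT.rel_of_not_rel (ne_of_notMem_pathVerts hw (hij.trans_lt hj)).symm fun hi =>
    hT.asymm hwj (h.rel_of_le hT hw hij hj hi)

theorem lt_of_rel_of_rel (h : IsBlockedPath r k v) (hT : IsTournament r) (hw : w ∉ pathVerts k v)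
    {i j : ℕ} (hi : i < k) (hwi : r w (v i)) (hjw : r (v j) w) : i < j := by
  by_contra! hji
  exact hT.asymm hwi (h.rel_of_le hT hw hji hi hjw)

variable [Fintype α] [DecidableRel r]

theorem two_mul_add_one_le_card_out (h : IsBlockedPath r k v) (hT : IsTournament r)
    (hp : ∀ x y, x ≠ y → p ≤ p2 r x y) {i : ℕ} (hi : i + 1 < k) (hback : ∀ j < i, r (v j) (v i)) :
    2 * p + 1 ≤ #{y ∈ pathVerts k v | r (v i) y} := by
  refine hT.two_mul_add_one_le_card_out hp ⟨v (i + 1), apply_mem_pathVerts hi, h.rel_succ i hi⟩ ?_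
  intro y hy hiy z hiz hzy
  obtain ⟨j, hj, rfl⟩ := mem_pathVerts.1 hy
  by_contra hz
  exact hT.asymm hiy (hback j (h.lt_of_rel_of_rel hT hz hj hzy hiz))

theorem two_mul_add_two_le_length (h : IsBlockedPath r k v) (hT : IsTournament r)
    (hp : ∀ x y, x ≠ y → p ≤ p2 r x y) : 2 * p + 2 ≤ k := by
  have hk := h.two_le
  have hout := h.two_mul_add_one_le_card_out hT hp (i := 0) (by omega) (by simp)
  have hlt : #{y ∈ pathVerts k v | r (v 0) y} < #(pathVerts k v) :=
    card_lt_card (filter_ssubset.2 ⟨v 0, apply_mem_pathVerts (by omega), hT.irrefl _⟩)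
  rw [h.card_pathVerts] at hlt
  omega

theorem two_mul_add_two_le_card_compl (h : IsBlockedPath r k v) (hT : IsTournament r)
    (hp : ∀ x y, x ≠ y → p ≤ p2 r x y) (hp_pos : 0 < p) (hW : 1 < #(pathVerts k v)ᶜ) :
    2 * p + 2 ≤ #(pathVerts k v)ᶜ := by
  -- The out-neighbourhoods in the path of the outside vertices are nested, and no 2-path leads
  -- through the path from a vertex with the smallest one to another outside vertex.
  obtain ⟨x, hx, hmin⟩ := exists_min_image (pathVerts k v)ᶜ
    (fun x => #{u ∈ pathVerts k v | r x u}) (card_pos.1 (by omega))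
  have hclosed : ∀ y ∈ (pathVerts k v)ᶜ, ∀ z, r x z → r z y → z ∈ (pathVerts k v)ᶜ := by
    intro y hy z hxz hzy
    rw [mem_compl]
    intro hz
    refine (hmin y hy).not_gt (card_lt_card ?_)
    rw [mem_compl] at hx hy
    obtain ⟨i, hi, rfl⟩ := mem_pathVerts.1 hz
    refine ssubset_iff_of_subset ?_ |>.2
      ⟨v i, mem_filter.2 ⟨hz, hxz⟩, fun hmem => hT.asymm hzy (mem_filter.1 hmem).2⟩
    intro u hu
    obtain ⟨huP, hyu⟩ := mem_filter.1 hu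
    obtain ⟨j, hj, rfl⟩ := mem_pathVerts.1 huP
    have hji : j < i := h.lt_of_rel_of_rel hT hy hj hyu hzy
    exact mem_filter.2 ⟨huP, h.rel_of_ge hT hx hji.le hi hxz⟩
  obtain ⟨y, hy, hne⟩ := exists_mem_ne hW x
  obtain ⟨z, hxz, hzy⟩ := exists_rel_rel_of_p2_pos (hp_pos.trans_le (hp x y hne.symm))
  have hout := hT.two_mul_add_one_le_card_out hp ⟨z, hclosed y hy z hxz hzy, hxz⟩
    (fun y hy _ => hclosed y hy)
  have hlt : #{y ∈ (pathVerts k v)ᶜ | r x y} < #(pathVerts k v)ᶜ :=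
    card_lt_card (filter_ssubset.2 ⟨x, hx, hT.irrefl x⟩)
  omega

theorem four_mul_add_one_le_length (h : IsBlockedPath r k v) (hT : IsTournament r)
    (hp : ∀ x y, x ≠ y → p ≤ p2 r x y) (hw : w ∉ pathVerts k v) (hw₁ : r w (v 1))
    (hw₂ : r (v (k - 2)) w) : 4 * p + 1 ≤ k := by
  have hk := h.two_le
  set X := {b ∈ range (k - 1) | r (v 0) (v (b + 1))}
  set Y := {b ∈ range (k - 1) | r (v b) (v (k - 1))}
  have hXcard : 2 * p + 1 ≤ #X := by
    refine (h.two_mul_add_one_le_card_out hT hp (i := 0) (by omega) (by simp)).trans ?_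
    refine (card_le_card fun y hy => ?_).trans (card_image_le (f := fun b => v (b + 1)))
    obtain ⟨hyP, h0y⟩ := mem_filter.1 hy
    obtain ⟨_ | b, hb, rfl⟩ := mem_pathVerts.1 hyP
    · exact absurd h0y (hT.irrefl _)
    · exact mem_image.2 ⟨b, mem_filter.2 ⟨mem_range.2 (by omega), h0y⟩, rfl⟩
  have hYcard : 2 * p + 1 ≤ #Y := by
    have hin : 2 * p + 1 ≤ #{y ∈ pathVerts k v | r y (v (k - 1))} := by
      simpa only [pathVerts_reverse, Nat.sub_zero] using
        h.swap.two_mul_add_one_le_card_out hT.swap (le_p2_swap hp) (i := 0) (by omega) (by simp)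
    refine hin.trans ((card_le_card fun y hy => ?_).trans (card_image_le (f := v)))
    obtain ⟨hyP, hyk⟩ := mem_filter.1 hy
    obtain ⟨b, hb, rfl⟩ := mem_pathVerts.1 hyP
    have hbk : b ≠ k - 1 := fun e => hT.ne_of_rel hyk (by rw [e])
    exact mem_image.2 ⟨b, mem_filter.2 ⟨mem_range.2 (by omega), hyk⟩, rfl⟩
  have hinter : X ∩ Y ⊆ {0, k - 2} := by
    intro b hb
    obtain ⟨hbX, hbY⟩ := mem_inter.1 hb
    obtain ⟨hbk, h0b⟩ := mem_filter.1 hbX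
    have hbk' := mem_range.1 hbk
    by_contra hne
    simp only [mem_insert, mem_singleton, not_or] at hne
    refine h.not_rotate w hw 0 b (k - 2) (by omega) (by omega) (by omega) h0b ?_ hw₂ hw₁
    rw [show k - 2 + 1 = k - 1 by omega]
    exact (mem_filter.1 hbY).2
  have hunion : #(X ∪ Y) ≤ k - 1 :=
    (card_le_card (union_subset (filter_subset _ _) (filter_subset _ _))).trans_eq (card_range _)
  have hinter_card := (card_le_card hinter).trans card_le_two
  have := card_union_add_card_inter X Y
  omega

theorem one_lt_card_compl (h : IsBlockedPath r k v) (hT : IsTournament r)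
    (hp : ∀ x y, x ≠ y → 1 < p2 r x y) (hw : w ∉ pathVerts k v) (hw₁ : r w (v 1))
    (hw₂ : r (v (k - 2)) w) : 1 < #(pathVerts k v)ᶜ := by
  by_contra hle
  have mem_of_ne : ∀ z, z ≠ w → z ∈ pathVerts k v := by
    intro z hzw
    by_contra hz
    exact hle (one_lt_card.2 ⟨z, mem_compl.2 hz, w, mem_compl.2 hw, hzw⟩)
  have hk := h.two_mul_add_two_le_length hT hp
  -- `v j` is the first in-neighbour of `w`; the rotation is taken at `b = j`.
  obtain ⟨j, hjw, hjmin⟩ : ∃ j, r (v j) w ∧ ∀ i < j, ¬ r (v i) w := by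
    have hex : ∃ j, r (v j) w := ⟨_, hw₂⟩
    exact ⟨Nat.find hex, Nat.find_spec hex, fun _ => Nat.find_min hex⟩
  have hj_le : j ≤ k - 2 := not_lt.1 fun hlt => hjmin _ hlt hw₂
  have hj_gt : 1 < j := h.lt_of_rel_of_rel hT hw (by omega) hw₁ hjw
  obtain ⟨a, ha, haj⟩ : ∃ a, a + 1 < j ∧ r (v a) (v (j + 1)) := by
    obtain ⟨z, hz, hwz, hzj⟩ := exists_ne_rel_rel_of_one_lt_p2
      (hp w (v (j + 1)) (ne_of_notMem_pathVerts hw (by omega)).symm) (v (j - 1))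
    obtain ⟨a, hak, rfl⟩ := mem_pathVerts.1 (mem_of_ne z (hT.ne_of_rel hwz).symm)
    have haj : a < j := h.lt_of_rel_of_rel hT hw hak hwz hjw
    have hne : a ≠ j - 1 := fun e => hz (by rw [e])
    exact ⟨a, by omega, hzj⟩
  obtain ⟨c, hc, hck, hjc, hcw⟩ : ∃ c, j < c ∧ c + 1 < k ∧ r (v j) (v (c + 1)) ∧ r (v c) w := by
    obtain ⟨z, hz, hjz, hzw⟩ := exists_ne_rel_rel_of_one_lt_p2
      (hp (v j) w (ne_of_notMem_pathVerts hw (by omega))) (v (j + 1))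
    obtain ⟨y, hyk, rfl⟩ := mem_pathVerts.1 (mem_of_ne z (hT.ne_of_rel hzw))
    have hjy : j ≤ y := not_lt.1 fun hlt => hjmin y hlt hzw
    have hne : y ≠ j := fun e => hT.ne_of_rel hjz (by rw [e])
    have hne' : y ≠ j + 1 := fun e => hz (by rw [e])
    refine ⟨y - 1, by omega, by omega, ?_, h.rel_of_le hT hw (by omega) (by omega) hjw⟩
    rwa [show y - 1 + 1 = y by omega]
  have hwa : r w (v (a + 1)) :=
    hT.rel_of_not_rel (ne_of_notMem_pathVerts hw (by omega)).symm (hjmin _ ha)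
  exact h.not_rotate w hw a j c (by omega) hc hck haj hjc hcw hwa

theorem four_mul_add_three_le_length_add_card_in (h : IsBlockedPath r k v) (hT : IsTournament r)
    (hp : ∀ x y, x ≠ y → p ≤ p2 r x y) (hp_pos : 0 < p) :
    4 * p + 3 ≤ k + #{w ∈ (pathVerts k v)ᶜ | r w (v 1)} := by
  have := h.nontrivial
  have hk := h.two_mul_add_two_le_length hT hp
  have hout : 2 * p + 1 ≤ #{y ∈ pathVerts k v | r (v 1) y} :=
    h.two_mul_add_one_le_card_out hT hp (by omega) fun j hj => by
      obtain rfl : j = 0 := by omega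
      exact h.rel_succ 0 (by omega)
  have hin := hT.two_mul_add_one_le_inDeg hp hp_pos (v 1)
  have hin_split : inDeg r (v 1) ≤
      #{y ∈ pathVerts k v | r y (v 1)} + #{w ∈ (pathVerts k v)ᶜ | r w (v 1)} := by
    rw [inDeg, ← union_compl (pathVerts k v), filter_union]
    exact card_union_le _ _
  have hsum := hT.card_out_add_card_in (pathVerts k v) (v 1)
  have hcard := card_erase_add_one (apply_mem_pathVerts (v := v) (show 1 < k by omega))
  rw [h.card_pathVerts] at hcard
  omega

theorem four_mul_add_one_le_card_out_add (h : IsBlockedPath r k v) (hT : IsTournament r)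
    (hp : ∀ x y, x ≠ y → p ≤ p2 r x y) (hp_pos : 0 < p)
    (hne : ∃ w ∉ pathVerts k v, r (v 1) w) :
    4 * p + 1 ≤ #{w ∈ (pathVerts k v)ᶜ | r (v 1) w} +
      2 * #{w ∈ (pathVerts k v)ᶜ | r w (v 1)} := by
  have := h.nontrivial
  have hk := h.two_le
  set A := {w ∈ (pathVerts k v)ᶜ | r w (v 1)}
  set B := {w ∈ (pathVerts k v)ᶜ | r (v 1) w}
  obtain ⟨x, hx, hlt⟩ : ∃ x ∈ B, 2 * #{z ∈ B | r x z} < #B := by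
    obtain ⟨w, hw, h1w⟩ := hne
    exact hT.swap.exists_two_mul_card_in_lt ⟨w, mem_filter.2 ⟨mem_compl.2 hw, h1w⟩⟩
  obtain ⟨hxW, h1x⟩ := mem_filter.1 hx
  rw [mem_compl] at hxW
  have hsub : ({y | r x y} : Finset α) ⊆ insert (v 0) ({z ∈ B | r x z} ∪ A) := by
    intro y hy
    have hxy := (mem_filter.1 hy).2
    rw [mem_insert, mem_union]
    by_cases hyP : y ∈ pathVerts k v
    · obtain ⟨i, hi, rfl⟩ := mem_pathVerts.1 hyP
      have hi0 : i < 1 := h.lt_of_rel_of_rel hT hxW hi hxy h1x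
      exact Or.inl (congrArg v (by omega))
    · have hyW := mem_compl.2 hyP
      by_cases h1y : r (v 1) y
      · exact Or.inr (Or.inl (mem_filter.2 ⟨mem_filter.2 ⟨hyW, h1y⟩, hxy⟩))
      · have hne := ne_of_notMem_pathVerts hyP (show 1 < k by omega)
        exact Or.inr (Or.inr (mem_filter.2 ⟨hyW, hT.rel_of_not_rel hne.symm h1y⟩))
  have hout : 2 * p + 1 ≤ #{z ∈ B | r x z} + #A + 1 := calc
    2 * p + 1 ≤ outDeg r x := hT.two_mul_add_one_le_outDeg hp hp_pos x
    _ ≤ #({z ∈ B | r x z} ∪ A) + 1 := (card_le_card hsub).trans (card_insert_le _ _)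
    _ ≤ #{z ∈ B | r x z} + #A + 1 := by grw [card_union_le]
  omega

theorem sixteen_mul_add_ten_le_of_forall_not_rel (h : IsBlockedPath r k v) (hT : IsTournament r)
    (hp : ∀ x y, x ≠ y → p ≤ p2 r x y) (hp_pos : 0 < p) (hW : (pathVerts k v)ᶜ.Nonempty)
    (hmid : ∀ w ∉ pathVerts k v, r w (v 1) → ¬ r (v (k - 2)) w) :
    16 * p + 10 ≤ 3 * Fintype.card α := by
  have hk := h.two_mul_add_two_le_length hT hp
  have hW_erase : ∀ i < k, #((pathVerts k v)ᶜ.erase (v i)) = #(pathVerts k v)ᶜ := fun i hi => by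
    rw [erase_eq_of_notMem (notMem_compl.2 (apply_mem_pathVerts hi))]
  have hfirst := hT.card_out_add_card_in (pathVerts k v)ᶜ (v 1)
  have hlast := hT.card_out_add_card_in (pathVerts k v)ᶜ (v (k - 2))
  rw [hW_erase _ (by omega)] at hfirst hlast
  have rel_last_iff : ∀ w ∈ (pathVerts k v)ᶜ, r w (v (k - 2)) ↔ r w (v 1) := by
    intro w hwW
    have hw := mem_compl.1 hwW
    have hne := ne_of_notMem_pathVerts hw (show k - 2 < k by omega)
    exact ⟨h.rel_of_ge hT hw (by omega) (by omega),
      fun hw₁ => hT.rel_of_not_rel hne.symm (hmid w hw hw₁)⟩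
  have hin_eq : #{w ∈ (pathVerts k v)ᶜ | r w (v (k - 2))} = #{w ∈ (pathVerts k v)ᶜ | r w (v 1)} :=
    congrArg card (filter_congr rel_last_iff)
  have hk_sub : k - 1 - 1 = k - 2 := by omega
  have hlength := h.four_mul_add_three_le_length_add_card_in hT hp hp_pos
  have hlength' : 4 * p + 3 ≤ k + #{w ∈ (pathVerts k v)ᶜ | r (v (k - 2)) w} := by
    simpa only [pathVerts_reverse, Function.swap, hk_sub] using
      h.swap.four_mul_add_three_le_length_add_card_in hT.swap (le_p2_swap hp) hp_pos
  have hcard := h.card_compl_add_length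
  obtain ⟨w, hwW⟩ := hW
  have hw := mem_compl.1 hwW
  by_cases hw₁ : r w (v 1)
  · have hparts : 4 * p + 1 ≤ #{w ∈ (pathVerts k v)ᶜ | r w (v (k - 2))} +
        2 * #{w ∈ (pathVerts k v)ᶜ | r (v (k - 2)) w} := by
      simpa only [pathVerts_reverse, Function.swap, hk_sub] using
        h.swap.four_mul_add_one_le_card_out_add hT.swap (le_p2_swap hp) hp_pos
          ⟨w, by rwa [pathVerts_reverse], (rel_last_iff w hwW).2 hw₁⟩
    omega
  · have hparts := h.four_mul_add_one_le_card_out_add hT hp hp_pos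
      ⟨w, hw, hT.rel_of_not_rel (ne_of_notMem_pathVerts hw (by omega)) hw₁⟩
    omega

theorem sixteen_mul_add_ten_le (h : IsBlockedPath r k v) (hT : IsTournament r)
    (hp : ∀ x y, x ≠ y → p ≤ p2 r x y) (hp_two : 2 ≤ p) (hW : (pathVerts k v)ᶜ.Nonempty) :
    16 * p + 10 ≤ 3 * Fintype.card α := by
  by_cases! hmid : ∃ w ∉ pathVerts k v, r w (v 1) ∧ r (v (k - 2)) w
  · obtain ⟨w, hw, hw₁, hw₂⟩ := hmid
    have hlength := h.four_mul_add_one_le_length hT hp hw hw₁ hw₂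
    have hW_card := h.one_lt_card_compl hT (fun x y hne => hp_two.trans (hp x y hne)) hw hw₁ hw₂
    have hcompl := h.two_mul_add_two_le_card_compl hT hp (by omega) hW_card
    have hcard := h.card_compl_add_length
    omega
  · exact h.sixteen_mul_add_ten_le_of_forall_not_rel hT hp (by omega) hW hmid

end IsBlockedPath

end BlockedPath

section Extension

variable {α : Type*} {r : α → α → Prop} {k : ℕ} {v : ℕ → α} {w : α}

/-- The list `[v s, …, v (t - 1)]`, empty when `t ≤ s`: the pieces into which a path given by the
sequence `v` is cut. -/
def seqSlice (v : ℕ → α) (s t : ℕ) : List α := (List.Ico s t).map v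

theorem seqSlice_append {s t u : ℕ} (hst : s ≤ t) (htu : t ≤ u) :
    seqSlice v s t ++ seqSlice v t u = seqSlice v s u := by
  rw [seqSlice, seqSlice, seqSlice, ← List.map_append, List.Ico.append_consecutive hst htu]

theorem head?_seqSlice {s t : ℕ} (hst : s < t) : (seqSlice v s t).head? = some (v s) := by
  rw [seqSlice, List.Ico.eq_cons hst, List.map_cons, List.head?_cons]

theorem getLast?_seqSlice_succ {s t : ℕ} (hst : s ≤ t) :
    (seqSlice v s (t + 1)).getLast? = some (v t) := by
  rw [seqSlice, List.Ico.succ_top hst, List.map_append, List.map_singleton, List.getLast?_concat]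

theorem seqSlice_getD (l : List α) (d : α) : seqSlice (fun i => l.getD i d) 0 l.length = l := by
  refine List.ext_getElem (by simp [seqSlice]) fun i _ hi => ?_
  simp [seqSlice, List.Ico.zero_bot, hi]

theorem IsDirPath.isChain_seqSlice (hl : IsDirPath r (seqSlice v 0 k)) {s t : ℕ} (hst : s ≤ t)
    (htk : t ≤ k) : (seqSlice v s t).IsChain r := by
  have hchain : (seqSlice v 0 k).IsChain r := hl.2
  rw [← seqSlice_append (Nat.zero_le t) htk, ← seqSlice_append (Nat.zero_le s) hst] at hchain
  exact hchain.left_of_append.right_of_append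

variable [DecidableEq α]

theorem toFinset_seqSlice : (seqSlice v 0 k).toFinset = pathVerts k v := by
  ext x
  simp only [seqSlice, List.mem_toFinset, List.mem_map, List.Ico.mem, Nat.zero_le, true_and,
    mem_pathVerts]

theorem extendable_of_perm_cons {l l' : List α} (hl : l.Nodup) (hw : w ∉ l.toFinset)
    (hperm : l'.Perm (w :: l)) (hchain : l'.IsChain r) (hhead : l'.head? = l.head?)
    (hlast : l'.getLast? = l.getLast?) : Extendable r l := by
  refine ⟨w, hw, l', ⟨?_, hchain⟩, hhead, hlast, ?_⟩
  · exact hperm.nodup_iff.2 (List.nodup_cons.2 ⟨fun h => hw (List.mem_toFinset.2 h), hl⟩)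
  · rw [List.toFinset_eq_of_perm _ _ hperm, List.toFinset_cons]

namespace IsDirPath

theorem extendable_of_insert (hl : IsDirPath r (seqSlice v 0 k)) (hw : w ∉ pathVerts k v)
    {i : ℕ} (hi : i + 1 < k) (hiw : r (v i) w) (hwi : r w (v (i + 1))) :
    Extendable r (seqSlice v 0 k) := by
  have hsplit := seqSlice_append (v := v) (Nat.zero_le (i + 1)) hi.le
  refine extendable_of_perm_cons (l' := seqSlice v 0 (i + 1) ++ w :: seqSlice v (i + 1) k)
    hl.1 (by rwa [toFinset_seqSlice]) (hsplit ▸ List.perm_middle) ?_ ?_ ?_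
  · rw [List.isChain_append, List.isChain_cons, getLast?_seqSlice_succ (Nat.zero_le i),
      head?_seqSlice hi]
    simp [hiw, hwi, hl.isChain_seqSlice (Nat.zero_le (i + 1)) hi.le,
      hl.isChain_seqSlice hi.le le_rfl]
  · simp only [← hsplit, List.head?_append, head?_seqSlice (Nat.succ_pos i), Option.some_or]
  · obtain ⟨m, rfl⟩ : ∃ m, k = m + 1 := ⟨k - 1, by omega⟩
    simp [List.getLast?_cons, getLast?_seqSlice_succ (show i + 1 ≤ m by omega),
      getLast?_seqSlice_succ]

theorem extendable_of_rotate (hl : IsDirPath r (seqSlice v 0 k)) (hw : w ∉ pathVerts k v)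
    {a b c : ℕ} (hab : a < b) (hbc : b < c) (hc : c + 1 < k) (hab' : r (v a) (v (b + 1)))
    (hbc' : r (v b) (v (c + 1))) (hcw : r (v c) w) (hwa : r w (v (a + 1))) :
    Extendable r (seqSlice v 0 k) := by
  have hsplit : seqSlice v 0 (a + 1) ++ (seqSlice v (a + 1) (b + 1) ++
      (seqSlice v (b + 1) (c + 1) ++ seqSlice v (c + 1) k)) = seqSlice v 0 k := by
    rw [seqSlice_append (by omega) (by omega), seqSlice_append (by omega) (by omega),
      seqSlice_append (by omega) (by omega)]
  refine extendable_of_perm_cons (l' := seqSlice v 0 (a + 1) ++ (seqSlice v (b + 1) (c + 1) ++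
    w :: (seqSlice v (a + 1) (b + 1) ++ seqSlice v (c + 1) k)))
    hl.1 (by rwa [toFinset_seqSlice]) ?_ ?_ ?_ ?_
  · rw [← hsplit, List.perm_iff_count]
    intro x
    simp only [List.count_append, List.count_cons]
    omega
  · rw [List.isChain_append, List.isChain_append, List.isChain_cons, List.isChain_append]
    simp only [List.head?_append, List.head?_cons, head?_seqSlice (show b + 1 < c + 1 by omega),
      head?_seqSlice (show a + 1 < b + 1 by omega), head?_seqSlice hc,
      getLast?_seqSlice_succ (Nat.zero_le a), getLast?_seqSlice_succ (show b + 1 ≤ c by omega),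
      getLast?_seqSlice_succ (show a + 1 ≤ b by omega)]
    simp [hab', hbc', hcw, hwa, hl.isChain_seqSlice (Nat.zero_le (a + 1)) (by omega),
      hl.isChain_seqSlice (show b + 1 ≤ c + 1 by omega) hc.le,
      hl.isChain_seqSlice (show a + 1 ≤ b + 1 by omega) (by omega),
      hl.isChain_seqSlice hc.le le_rfl]
  · simp only [← hsplit, List.head?_append, head?_seqSlice (Nat.succ_pos a), Option.some_or]
  · obtain ⟨m, rfl⟩ : ∃ m, k = m + 1 := ⟨k - 1, by omega⟩
    simp [List.getLast?_cons, getLast?_seqSlice_succ (show c + 1 ≤ m by omega),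
      getLast?_seqSlice_succ]

theorem isBlockedPath (hl : IsDirPath r (seqSlice v 0 k)) (hk : 2 ≤ k)
    (hext : ¬ Extendable r (seqSlice v 0 k)) : IsBlockedPath r k v where
  two_le := hk
  injOn i hi j hj hij :=
    List.inj_on_of_nodup_map hl.1 (List.Ico.mem.2 ⟨Nat.zero_le i, hi⟩)
      (List.Ico.mem.2 ⟨Nat.zero_le j, hj⟩) hij
  rel_succ i hi := by
    have hchain := hl.isChain_seqSlice (show i ≤ i + 2 by omega) hi
    rw [seqSlice, List.Ico.eq_cons (by omega), List.Ico.eq_cons (by omega)] at hchain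
    exact hchain.rel
  not_insert _ hw _ hi hiw hwi := hext (hl.extendable_of_insert hw hi hiw hwi)
  not_rotate _ hw _ _ _ hab hbc hc hab' hbc' hcw hwa :=
    hext (hl.extendable_of_rotate hw hab hbc hc hab' hbc' hcw hwa)

end IsDirPath

end Extension

theorem stmt16_general {α : Type*} [Fintype α] [DecidableEq α] {r : α → α → Prop} [DecidableRel r]
    (hT : IsTournament r) {p : ℕ} (hp : ∀ x y, x ≠ y → p ≤ p2 r x y) (hp_two : 2 ≤ p)
    (hbig : 3 * Fintype.card α < 16 * p + 10) : PathExtendable r := by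
  intro l hl hlen hne
  by_contra hext
  obtain ⟨v, hv⟩ : ∃ v, seqSlice v 0 l.length = l := ⟨_, seqSlice_getD l (l[0]'(by omega))⟩
  rw [← hv] at hl hne hext
  have hblocked := hl.isBlockedPath hlen hext
  have houtside : (pathVerts l.length v)ᶜ.Nonempty := by
    rwa [nonempty_iff_ne_empty, ne_eq, compl_eq_empty_iff, ← toFinset_seqSlice]
  exact hbig.not_ge (hblocked.sixteen_mul_add_ten_le hT hp hp_two houtside)

theorem stmt16 (r : V → V → Prop) [DecidableRel r] (hT : IsTournament r)
    (π : ℕ) (hπ : IsPi2 r π)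
    (hbig : (7 * Fintype.card V : ℤ) - 10 < 36 * π) :
    PathExtendable r := by
  obtain ⟨hp, x, y, hne, -⟩ := hπ
  have : Nontrivial V := ⟨x, y, hne⟩
  have htwo := Fintype.one_lt_card (α := V)
  have hcard := hT.four_mul_add_three_le_card hp (by omega)
  exact stmt16_general hT hp (by omega) (by omega)
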